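/- Let R be a commutative ring and let U and V be finitely generated projective R-modules. Let ω be an alternating R-bilinear form on V (ω(v)(v) = 0 for all v) and let f : U → V be an R-linear map which is isotropic for ω, i.e. ω(f(u))(f(u')) = 0 for all u, u' ∈ U. Define g : V → U* by g(v)(u) = ω(v)(f(u)). If f is injective, g is surjective, and the sequence U → V → U* is exact at V (the range of f equals the kernel of g), then ω is non-degenerate: the adjoint map ω♭ : V → V*, v ↦ ω(v, −), is bijective. -/

import Mathlib

/-- linear-algebra form of Lemma 1.3: let `U`, `V` be finitely generated
projective modules over a commutative ring `R`, `ω` an alternating bilinear form on `V`,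
`f : U → V` isotropic for `ω`, and `g : V → U*` defined by `g(v)(u) = ω(v)(f(u))`.
If `f` is injective, `g` is surjective and `range f = ker g`, then `ω` is non-degenerate:
the adjoint map `ω♭ : V → V*`, `v ↦ ω(v, −)`, is bijective. -/
theorem nondegenerate_of_nondegenerate_isotropic
    (R U V : Type*) [CommRing R] [AddCommGroup U] [Module R U]
    [AddCommGroup V] [Module R V]
    [Module.Finite R U] [Module.Projective R U]
    [Module.Finite R V] [Module.Projective R V]
    (ω : LinearMap.BilinForm R V) (halt : ∀ v : V, ω v v = 0)
    (f : U →ₗ[R] V) (hiso : ∀ u u' : U, ω (f u) (f u') = 0)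
    (g : V →ₗ[R] Module.Dual R U) (hg : ∀ (v : V) (u : U), g v u = ω v (f u))
    (hf : Function.Injective f) (hgsurj : Function.Surjective g)
    (hexact : LinearMap.range f = LinearMap.ker g) :
    Function.Bijective (fun v : V => (ω v : Module.Dual R V)) := by
  have hskew : ∀ x y : V, ω x y = - ω y x := by
    intro x y
    have h := halt (x + y)
    simp only [map_add, LinearMap.add_apply, halt, zero_add, add_zero] at h
    exact eq_neg_of_add_eq_zero_right h
  constructor
  · have key : ∀ v : V, ω v = 0 → v = 0 := by
      intro v hv
      have hgv : v ∈ LinearMap.ker g := by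
        rw [LinearMap.mem_ker]
        ext u
        simp [hg, hv]
      rw [← hexact] at hgv
      obtain ⟨u, rfl⟩ := hgv
      have hu : u = 0 := by
        rw [← Module.forall_dual_apply_eq_zero_iff R]
        intro φ
        obtain ⟨w, rfl⟩ := hgsurj φ
        rw [hg, hskew, hv]
        simp
      simp [hu]
    intro a b hab
    have hab' : ω a = ω b := hab
    exact sub_eq_zero.mp (key (a - b) (by rw [map_sub, hab', sub_self]))
  · intro φ
    obtain ⟨v, hv⟩ := hgsurj (φ ∘ₗ f)
    obtain ⟨s, hs⟩ := Module.projective_lifting_property g LinearMap.id hgsurj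
    have hs' : ∀ x, g (s x) = x := fun x => LinearMap.congr_fun hs x
    obtain ⟨u, hu⟩ := (Module.bijective_dual_eval R U).2
      ((φ - ω v : Module.Dual R V) ∘ₗ s)
    refine ⟨v - f u, ?_⟩
    ext w
    have hk : w - s (g w) ∈ LinearMap.range f := by
      rw [hexact, LinearMap.mem_ker, map_sub, hs', sub_self]
    obtain ⟨u', hu'⟩ := hk
    have h1 : φ (f u') = ω v (f u') := by
      rw [← hg, hv]; rfl
    have h2 : g w u = φ (s (g w)) - ω v (s (g w)) := LinearMap.congr_fun hu (g w)
    rw [hg, hskew] at h2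
    rw [hu', map_sub, map_sub] at h1
    change ω (v - f u) w = φ w
    rw [map_sub, LinearMap.sub_apply]
    linear_combination h2 - h1
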